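/- For all β(0,1)-trees T_1, …, T_k (k ≥ 1), open(σ(T_1,…,T_k)) = 1; that is, the image under σ of any sequence of β(0,1)-trees has exactly one open node. -/

import Mathlib

/-!
The children of `S = ρ(T_{k-1},…,T₁,ε)` all have label `0`, and the last one is a leaf.

Once the walk of `μ₁` reaches the first open node `x` of `T`, the children of `S` are appended at
`x`, so `x` now has a leaf as its rightmost child. It is no longer open, and the new leaf is the
only open node from `x` downwards (`countP_of_leaf`).

A node strictly above `x` was not open, which means that its rightmost child `c` was a leaf or was
excessive. Along the walk the label of `c` grows by one, while the sum of the labels of its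
children grows by at most one, because the appended children have label `0`
(`childSum_lt_label_muT`). So the new `c` is excessive and its parent is still not open.
Induction along the rightmost path gives exactly one open node.
-/

/-- Labeled rooted plane trees: each node carries a natural-number label and an
ordered list of subtrees. -/
inductive BTree : Type
  | node : ℕ → List BTree → BTree
deriving Repr

namespace BTree

/-- The trivial β(0,1)-tree ε: a single node labeled 0. -/
def eps : BTree := node 0 []

/-- The label of the root of a tree. -/
def label : BTree → ℕ
  | node n _ => n

/-- The list of subtrees of the root. -/
def children : BTree → List BTree
  | node _ ts => ts

/-- The sum of the labels of the children of the root. -/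
def childSum (t : BTree) : ℕ := (t.children.map label).sum

/-- Validity condition for non-root nodes of a β(0,1)-tree: leaves have label 0,
and the label of every node exceeds the sum of its children's labels by at most one. -/
inductive ValidSub : BTree → Prop
  | mk (n : ℕ) (ts : List BTree) :
      (ts = [] → n = 0) →
      n ≤ (ts.map label).sum + 1 →
      (∀ t ∈ ts, ValidSub t) →
      ValidSub (node n ts)

/-- `t` is a β(0,1)-tree: the trivial tree is the single node labeled 0; otherwise the
root label is one more than the sum of its children's labels, and every non-root node
has label at most one more than the sum of its children's labels, leaves having label 0. -/
def IsBeta (t : BTree) : Prop :=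
  (t.children = [] → t.label = 0) ∧
  (t.children ≠ [] → t.label = childSum t + 1) ∧
  ∀ c ∈ t.children, ValidSub c

mutual
/-- The rightmost path of a tree, from the root to the rightmost leaf; each node on
the path is recorded together with its full subtree. -/
def rpath : BTree → List BTree
  | node n ts => node n ts :: rpathL ts
def rpathL : List BTree → List BTree
  | [] => []
  | [t] => rpath t
  | _ :: t :: ts => rpathL (t :: ts)
end

/-- A node is moderate if its label does not exceed the sum of its children's labels. -/
def moderate (t : BTree) : Bool := decide (t.label ≤ childSum t)

/-- A node (on the rightmost path) is open iff it is a leaf (i.e. it is the rightmost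
leaf), or its rightmost child is a non-leaf moderate node. -/
def isOpenNode (t : BTree) : Bool :=
  match t.children.getLast? with
  | none => true
  | some c => !c.children.isEmpty && moderate c

/-- The statistic `root`: the label of the root. -/
def rootStat (t : BTree) : ℕ := t.label

/-- The statistic `open`: the number of open nodes (all of which lie on the
rightmost path), with open(ε) = 0. -/
def openStat : BTree → ℕ
  | node 0 [] => 0
  | t => (rpath t).countP isOpenNode

/-- The statistic `rmod`: the number of moderate nodes on the rightmost path,
with rmod(ε) = 0. -/
def rmodStat : BTree → ℕ
  | node 0 [] => 0
  | t => (rpath t).countP moderate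

mutual
/-- The number of nodes of a tree. -/
def size : BTree → ℕ
  | node _ ts => 1 + sizeL ts
def sizeL : List BTree → ℕ
  | [] => 0
  | t :: ts => size t + sizeL ts
end

mutual
/-- The number of excessive nodes of a tree (nodes whose label exceeds the sum of the
labels of their children). -/
def excT : BTree → ℕ
  | node n ts => (if (ts.map label).sum < n then 1 else 0) + excL ts
def excL : List BTree → ℕ
  | [] => 0
  | t :: ts => excT t + excL ts
end

/-- The sum U ⊕ V of two trees: identify the two roots into a new root labeled
root(U) + root(V) − 1, its children being those of U followed by those of V. -/
def oplus (u v : BTree) : BTree := node (u.label + v.label - 1) (u.children ++ v.children)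

/-- Relabel the root. -/
def setLabel (i : ℕ) (t : BTree) : BTree := node i t.children

/-- λ_i(T): join a new root, labeled i+1, by an edge to the old root, which is relabeled i. -/
def lam (i : ℕ) (t : BTree) : BTree := node (i + 1) [setLabel i t]

/-- Iterated ⊕ of a list of trees (ε for the empty list). -/
def oplusList : List BTree → BTree
  | [] => eps
  | [t] => t
  | t :: ts => oplus t (oplusList ts)

/-- ρ(T₁,…,T_k) = λ₀(T₁) ⊕ ⋯ ⊕ λ₀(T_k). -/
def rho (Ts : List BTree) : BTree := oplusList (Ts.map (lam 0))

/-- Add one to the label of the root. -/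
def incRoot (t : BTree) : BTree := node (t.label + 1) t.children

mutual
/-- Walk down the rightmost path of a tree looking for the i-th open node x, adding one
to each label on the way (through x, and through the rightmost child y of x if x is not
a leaf); at x, append the children of S. -/
def muT (S : BTree) : ℕ → BTree → BTree
  | i, node n ts =>
    if isOpenNode (node n ts) && decide (i ≤ 1) then
      if ts.isEmpty then node (n + 1) S.children
      else node (n + 1) (ts.dropLast ++ [incRoot (ts.getLastD eps)] ++ S.children)
    else
      node (n + 1) (muL S (if isOpenNode (node n ts) then i - 1 else i) ts)
def muL (S : BTree) (i : ℕ) : List BTree → List BTree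
  | [] => []
  | [t] => [muT S i t]
  | t :: ts => t :: muL S i ts
end

/-- μ_i(S,T): identify the i-th open node x on the rightmost path of T with the root of
S, keeping the label of x, and add one to each node on the rightmost path of T between
the root and y (inclusive), where y = x if x is a leaf and otherwise y is the rightmost
child of x.  (In particular μ₁(S,ε) = S when root(S) = 1.) -/
def mu (i : ℕ) (S T : BTree) : BTree := muT S i T

mutual
/-- Walk down the rightmost path of a tree adding j to every label; at the rightmost
leaf, attach the children of T. -/
def nuT (T : BTree) (j : ℕ) : BTree → BTree
  | node n [] => node (n + j) T.children
  | node n ts => node (n + j) (nuL T j ts)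
def nuL (T : BTree) (j : ℕ) : List BTree → List BTree
  | [] => []
  | [t] => [nuT T j t]
  | t :: ts => t :: nuL T j ts
end

/-- ν_i(S,T): identify the rightmost leaf x of S with the root of T, keeping the zero
label of x, and add i − 1 to each node on the rightmost path of S between the root and
x (inclusive).  (In particular ν₁(S,ε) = S.) -/
def nu (i : ℕ) (S T : BTree) : BTree := nuT T (i - 1) S

/-- σ(T₁,…,T_k) = μ₁(ρ(T_{k−1},…,T₁,ε), T_k). -/
def sigma (Ts : List BTree) : BTree :=
  mu 1 (rho (Ts.dropLast.reverse ++ [eps])) (Ts.getLastD eps)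

/-- The maximal suffix of a list of trees all of whose root labels are 0. -/
def zeroSuffix : List BTree → List BTree
  | [] => []
  | t :: ts =>
    let z := zeroSuffix ts
    if z.length = ts.length ∧ t.label = 0 then t :: z else z

/-- Subtract one from the label of the root. -/
def decRoot (t : BTree) : BTree := node (t.label - 1) t.children

mutual
/-- Inverse of μ on β(0,1)-trees with root label > 1: walk down the rightmost path to
the parent x of the first node labeled 0 on the path (subtracting one from the labels
on the way); the maximal zero-labeled suffix of the children of x is the list of
children of S, the rest (with the label of its last element decremented) are the
children of x in T.  Returns the pair (T, S) such that the input is μ_i(S,T). -/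
def decT : BTree → BTree × BTree
  | node n ts =>
    if (ts.getLastD eps).label = 0 then
      let zs := zeroSuffix ts
      let ps := ts.take (ts.length - zs.length)
      (node (n - 1) (if ps.isEmpty then [] else ps.dropLast ++ [decRoot (ps.getLastD eps)]),
       node 1 zs)
    else
      (node (n - 1) (decL ts).1, (decL ts).2)
def decL : List BTree → List BTree × BTree
  | [] => ([], eps)
  | [t] => ([(decT t).1], (decT t).2)
  | t :: ts => (t :: (decL ts).1, (decL ts).2)
end

/-- Restore the root label of a β(0,1)-tree whose root label was forgotten:
ε for a single node, and otherwise one plus the sum of the children's labels. -/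
def makeRoot : BTree → BTree
  | node _ [] => eps
  | node _ ts => node ((ts.map label).sum + 1) ts

/-- Fueled version of the map g.  A β(0,1)-tree with root label 1 is ρ(T₁,…,T_k) where
the Tⱼ are recovered from the children via `makeRoot`, and g maps it to
σ(g(T₁),…,g(T_k)); a β(0,1)-tree U with root label > 1 is μ_i(S,T) where (T,S) = decT U
and i = open(U) + 1 − open(S) (since open(μ_i(S,T)) = i − 1 + open(S)), and g maps it
to ν_i(g(S),g(T)); finally g(ε) = ε. -/
def gF : ℕ → BTree → BTree
  | 0, t => t
  | fuel + 1, t =>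
    match t with
    | node 0 _ => t
    | node 1 cs => sigma (cs.map fun c => gF fuel (makeRoot c))
    | node _ _ =>
      nu (openStat t + 1 - openStat (decT t).2) (gF fuel (decT t).2) (gF fuel (decT t).1)

/-- The map g on β(0,1)-trees: g(ε) = ε, g(ρ(T₁,…,T_k)) = σ(g(T₁),…,g(T_k)), and
g(μ_i(S,T)) = ν_i(g(S), g(T)).  (The number of nodes suffices as fuel since all
recursive calls are on trees with strictly fewer nodes.) -/
def g (t : BTree) : BTree := gF (size t) t


/-- The children of `S` all have label `0` and the last of them is the leaf `ε`; this is the only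
property of `ρ(T_{k-1},…,T₁,ε)` that matters. -/
def EndsInLeaf (S : BTree) : Prop :=
  ∃ L : List BTree, S.children = L ++ [eps] ∧ (L.map label).sum = 0

theorem label_node (n : ℕ) (ts : List BTree) : (node n ts).label = n := rfl

theorem rpathL_append (l : List BTree) (t : BTree) : rpathL (l ++ [t]) = rpath t := by
  induction l with
  | nil => simp [rpathL]
  | cons a l ih =>
    cases l with
    | nil => simp [rpathL]
    | cons b l => simpa [rpathL] using ih

theorem muL_append (S : BTree) (i : ℕ) (l : List BTree) (t : BTree) :
    muL S i (l ++ [t]) = l ++ [muT S i t] := by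
  induction l with
  | nil => simp [muL]
  | cons a l ih =>
    cases l with
    | nil => simp [muL]
    | cons b l => simpa [muL] using ih

theorem isOpenNode_append (n : ℕ) (l : List BTree) (c : BTree) :
    isOpenNode (node n (l ++ [c])) = (!c.children.isEmpty && moderate c) := by
  simp [isOpenNode, children]

theorem muT_nil (S : BTree) (n : ℕ) : muT S 1 (node n []) = node (n + 1) S.children := by
  simp [muT, isOpenNode, children]

theorem muT_open (S : BTree) (n : ℕ) (l : List BTree) (c : BTree)
    (h : isOpenNode (node n (l ++ [c])) = true) :
    muT S 1 (node n (l ++ [c])) = node (n + 1) (l ++ [incRoot c] ++ S.children) := by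
  simp [muT, h]

theorem muT_not_open (S : BTree) (n : ℕ) (l : List BTree) (c : BTree)
    (h : isOpenNode (node n (l ++ [c])) = false) :
    muT S 1 (node n (l ++ [c])) = node (n + 1) (l ++ [muT S 1 c]) := by
  simp [muT, h, muL_append]

theorem label_muT (S : BTree) (i : ℕ) (t : BTree) : (muT S i t).label = t.label + 1 := by
  cases t with
  | node n ts =>
    rw [muT]
    split_ifs <;> rfl

/-- A leaf or an excessive node becomes (or stays) excessive when the walk of `μ₁` passes through
it. -/
theorem childSum_lt_label_muT {S : BTree} (hS : EndsInLeaf S) (t : BTree)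
    (h : (!t.children.isEmpty && moderate t) = false) :
    childSum (muT S 1 t) < (muT S 1 t).label := by
  obtain ⟨L, hL, hsum⟩ := hS
  rw [label_muT]
  obtain ⟨n, ts⟩ := t
  rcases List.eq_nil_or_concat ts with rfl | ⟨l, c, rfl⟩
  · rw [muT_nil]
    simp only [childSum, children] at hL ⊢
    simp [hL, hsum, label, eps]
  · rw [List.concat_eq_append] at *
    have hn : (l.map label).sum + c.label < n := by
      simpa [children, moderate, childSum, label_node] using h
    cases ho : isOpenNode (node n (l ++ [c])) with
    | true =>
      rw [muT_open _ _ _ _ ho]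
      simp only [childSum, children] at hL ⊢
      simp [hL, hsum, label_node, eps, incRoot]
      omega
    | false =>
      rw [muT_not_open _ _ _ _ ho]
      simp [childSum, children, label_muT, label_node]
      omega

/-- A node whose rightmost child is `ε` is not open itself, while that leaf is. -/
theorem countP_of_leaf (n : ℕ) (l : List BTree) :
    (rpath (node n (l ++ [eps]))).countP isOpenNode = 1 := by
  have h1 : isOpenNode (node n (l ++ [eps])) = false := by
    rw [isOpenNode_append]; rfl
  have h2 : isOpenNode eps = true := rfl
  have h3 : rpath eps = [eps] := by simp [eps, rpath, rpathL]
  rw [rpath, rpathL_append, h3]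
  simp [h1, h2]

theorem countP_rpath_muT {S : BTree} (hS : EndsInLeaf S) :
    ∀ t : BTree, (rpath (muT S 1 t)).countP isOpenNode = 1
  | node n ts => by
    obtain ⟨L, hL, -⟩ := id hS
    rcases List.eq_nil_or_concat ts with hts | ⟨l, c, hts⟩
    · rw [hts, muT_nil, hL]
      exact countP_of_leaf _ _
    · rw [List.concat_eq_append] at hts
      cases ho : isOpenNode (node n (l ++ [c])) with
      | true =>
        rw [hts, muT_open _ _ _ _ ho, hL, ← List.append_assoc]
        exact countP_of_leaf _ _
      | false =>
        have hlt := childSum_lt_label_muT hS c (by rwa [isOpenNode_append] at ho)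
        have hno : isOpenNode (node (n + 1) (l ++ [muT S 1 c])) = false := by
          rw [isOpenNode_append]
          simp [moderate, hlt]
        have ih := countP_rpath_muT hS c
        rw [hts, muT_not_open _ _ _ _ ho, rpath, rpathL_append]
        simp [hno, ih]
termination_by t => sizeOf t
decreasing_by
  have hc : c ∈ ts := by simp [hts]
  have := List.sizeOf_lt_of_mem hc
  simp only [node.sizeOf_spec]
  omega

theorem children_oplusList (Ts : List BTree) :
    (oplusList (Ts.map (lam 0))).children = Ts.map (setLabel 0) := by
  induction Ts with
  | nil => rfl
  | cons a l ih =>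
    cases l with
    | nil => rfl
    | cons b l =>
      simp only [List.map_cons, oplusList] at ih ⊢
      simp only [oplus, children] at ih ⊢
      rw [ih]
      simp [lam]

theorem endsInLeaf_rho (Ts : List BTree) : EndsInLeaf (rho (Ts ++ [eps])) := by
  refine ⟨Ts.map (setLabel 0), ?_, ?_⟩
  · rw [rho, children_oplusList, List.map_append]
    rfl
  · simp [Function.comp_def, setLabel, label]

theorem openStat_eq (t : BTree) (h : t.label ≠ 0) :
    openStat t = (rpath t).countP isOpenNode := by
  obtain ⟨n, ts⟩ := t
  cases n with
  | zero => exact absurd rfl h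
  | succ n => rfl

/-- For all β(0,1)-trees T₁, …, T_k (k ≥ 1), open(σ(T₁,…,T_k)) = 1: the image under σ
of any sequence of β(0,1)-trees has exactly one open node. -/
theorem open_sigma (Ts : List BTree) (hne : Ts ≠ []) (hbeta : ∀ T ∈ Ts, IsBeta T) :
    openStat (sigma Ts) = 1 := by
  rw [sigma, mu, openStat_eq _ (by rw [label_muT]; omega)]
  exact countP_rpath_muT (endsInLeaf_rho _) _

end BTree
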